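/- arXiv:1905.07225 — 4 statements merged into one kernel-verified Lean document; each statement's English description precedes it below -/
import Mathlib

section
/- For all η,η' ∈ ℂ and all w,x,y,z ∈ ℤ/3ℤ with y ≠ z, the generalized median operator satisfies the matrix identity (J^z − J^y) · M^{wx/yz}[η,η'] = J^x · S[η,η'] − J^w. -/
noncomputable def ω : ℂ := Complex.exp (2 * Real.pi * Complex.I / 3)

def J : Matrix (Fin 3) (Fin 3) ℂ := !![0,1,0; 0,0,1; 1,0,0]

noncomputable def W : Matrix (Fin 3) (Fin 3) ℂ := !![1,1,1; 1,ω,ω^2; 1,ω^2,ω]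

/-- generalized cevian operator `S[η,η'] = W ⬝ diag(1,η',η) ⬝ W⁻¹` -/
noncomputable def S (η η' : ℂ) : Matrix (Fin 3) (Fin 3) ℂ :=
  W * Matrix.diagonal ![1, η', η] * W⁻¹

/-- `ω^k` for `k : ZMod 3` (well defined since `ω^3 = 1`). -/
noncomputable def ωz (k : ZMod 3) : ℂ := ω ^ k.val

/-- `J^k` for `k : ZMod 3` (well defined since `J^3 = 1`). -/
def Jz (k : ZMod 3) : Matrix (Fin 3) (Fin 3) ℂ := J ^ k.val

/-- generalized median operator `M^{wx/yz}[η,η']` -/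
noncomputable def M (η η' : ℂ) (w x y z : ZMod 3) : Matrix (Fin 3) (Fin 3) ℂ :=
  S ((η * ωz (-x) - ωz (-w)) / (ωz (-z) - ωz (-y)))
    ((η' * ωz x - ωz w) / (ωz z - ωz y))

/-!
The columns of `W` are eigenvectors of `J`, so `W` diagonalizes every matrix in sight:
`d ↦ W * diagonal d * W⁻¹` is a ring homomorphism whose image contains all `Jz k` and `S η η'`.
The matrix identity thus becomes an identity of eigenvalues in `Fin 3 → ℂ`. It is trivial on the
constant vector, and on the other two eigenvectors it is the definition of the parameters of `M`,
whose denominators are nonzero because `ω` is primitive.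
-/

section DiagonalConj

variable {n R : Type*} [Fintype n] [DecidableEq n] [Semiring R]

/-- The ring homomorphism `d ↦ P * diagonal d * P⁻¹`, whose image consists of the matrices
diagonalized by the columns of `P`. -/
def diagonalConj (P : (Matrix n n R)ˣ) : (n → R) →+* Matrix n n R :=
  (MulSemiringAction.toRingHom _ (Matrix n n R) (ConjAct.toConjAct P)).comp
    (Matrix.diagonalRingHom n R)

theorem diagonalConj_apply (P : (Matrix n n R)ˣ) (d : n → R) :
    diagonalConj P d = P * Matrix.diagonal d * (P⁻¹ : (Matrix n n R)ˣ) :=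
  rfl

theorem eq_diagonalConj_iff {P : (Matrix n n R)ˣ} {A : Matrix n n R} {d : n → R} :
    A = diagonalConj P d ↔ A * P = P * Matrix.diagonal d := by
  rw [diagonalConj_apply, Units.eq_mul_inv_iff_mul_eq]

end DiagonalConj

theorem isPrimitiveRoot_ω : IsPrimitiveRoot ω 3 :=
  Complex.isPrimitiveRoot_exp 3 three_ne_zero

theorem ωz_injective : Function.Injective ωz := fun _ _ h =>
  ZMod.val_injective 3 (isPrimitiveRoot_ω.pow_inj (ZMod.val_lt _) (ZMod.val_lt _) h)

theorem ωz_natCast (m : ℕ) : ωz m = ω ^ m := by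
  rw [ωz, ZMod.val_natCast, ← pow_eq_pow_mod _ isPrimitiveRoot_ω.pow_eq_one]

theorem ωz_neg (k : ZMod 3) : ωz (-k) = (ω ^ 2) ^ k.val := by
  have neg_eq_two_mul : -k = 2 * k := by decide +revert
  rw [← pow_mul, ← ωz_natCast, Nat.cast_mul, ZMod.natCast_zmod_val, Nat.cast_ofNat, neg_eq_two_mul]

theorem ω_sq_sq : (ω ^ 2) ^ 2 = ω := by
  rw [← pow_mul, pow_succ, isPrimitiveRoot_ω.pow_eq_one, one_mul]

theorem W_eq_vandermonde : W = Matrix.vandermonde fun i : Fin 3 => ω ^ (i : ℕ) := by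
  ext i j
  fin_cases i <;> fin_cases j <;> simp [W, Matrix.vandermonde_apply, ω_sq_sq]

theorem isUnit_det_W : IsUnit W.det := by
  rw [isUnit_iff_ne_zero, W_eq_vandermonde, Matrix.det_vandermonde_ne_zero_iff]
  exact fun i j h => Fin.ext (isPrimitiveRoot_ω.pow_inj i.isLt j.isLt h)

/-- `W` as a unit of the matrix ring, the common diagonalizing matrix for `diagonalConj`. -/
noncomputable def unitW : (Matrix (Fin 3) (Fin 3) ℂ)ˣ :=
  W.nonsingInvUnit isUnit_det_W

theorem S_eq_diagonalConj (η η' : ℂ) : S η η' = diagonalConj unitW ![1, η', η] :=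
  rfl

theorem J_mul_W : J * W = W * Matrix.diagonal ![1, ω, ω ^ 2] := by
  have ω_cubed : ω ^ 3 = 1 := isPrimitiveRoot_ω.pow_eq_one
  ext i j
  fin_cases i <;> fin_cases j <;>
    simp [J, W, Matrix.mul_apply, Fin.sum_univ_three, ← pow_two, ← pow_succ, ← pow_succ',
      ω_cubed, ω_sq_sq]

theorem J_eq_diagonalConj : J = diagonalConj unitW ![1, ω, ω ^ 2] :=
  eq_diagonalConj_iff.mpr J_mul_W

theorem Jz_eq_diagonalConj (k : ZMod 3) :
    Jz k = diagonalConj unitW ![1, ωz k, ωz (-k)] := by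
  have eigenvalues_pow : ![1, ω, ω ^ 2] ^ k.val = ![1, ωz k, ωz (-k)] := by
    ext i
    fin_cases i
    · simp
    · simp [ωz]
    · simp [ωz_neg]
  rw [Jz, J_eq_diagonalConj, ← map_pow, eigenvalues_pow]

theorem median_matrix_identity (η η' : ℂ) (w x y z : ZMod 3) (hyz : y ≠ z) :
    (Jz z - Jz y) * M η η' w x y z = Jz x * S η η' - Jz w := by
  have hpos : ωz z - ωz y ≠ 0 := sub_ne_zero.mpr (ωz_injective.ne hyz.symm)
  have hneg : ωz (-z) - ωz (-y) ≠ 0 :=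
    sub_ne_zero.mpr (ωz_injective.ne (neg_injective.ne hyz.symm))
  simp only [M, S_eq_diagonalConj, Jz_eq_diagonalConj, ← map_sub, ← map_mul]
  congr 1
  ext i
  fin_cases i
  · simp
  · simp [mul_div_cancel₀ _ hpos, mul_comm]
  · simp [mul_div_cancel₀ _ hneg, mul_comm]
end

section
/- For all η,η' ∈ ℂ and all w,x,y,z ∈ ℤ/3ℤ with y ≠ z, one has M^{wx/yz}[η,η'] · J = M^{(w+1)(x+1)/yz}[η,η']. -/
/-!
The columns of `W` are eigenvectors of `J`, with eigenvalues `1, ω, ω²`, so `J` is itself the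
generalized cevian operator `S[ω², ω]`. Since all these operators are diagonal in the same basis,
right multiplication by `J` only rescales the parameters of a median operator by `ω⁻¹` and `ω`,
which advances `w` and `x` by one in both numerators.
-/

theorem det_vandermonde_pow_ne_zero {R : Type*} [CommRing R] [IsDomain R] {ζ : R} {n : ℕ}
    (hζ : IsPrimitiveRoot ζ n) : (Matrix.vandermonde fun i : Fin n => ζ ^ (i : ℕ)).det ≠ 0 :=
  Matrix.det_vandermonde_ne_zero_iff.mpr fun i j h => Fin.ext (hζ.pow_inj i.isLt j.isLt h)

theorem ω_pow_three : ω ^ 3 = 1 := isPrimitiveRoot_ω.pow_eq_one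

theorem ωz_one : ωz 1 = ω := pow_one ω

theorem ωz_neg_one : ωz (-1) = ω ^ 2 := rfl

theorem ωz_add (k l : ZMod 3) : ωz (k + l) = ωz k * ωz l := by
  rw [ωz, ωz, ωz, ZMod.val_add, ← pow_add, ← pow_eq_pow_mod _ ω_pow_three]

theorem S_mul_S (α α' β β' : ℂ) : S α α' * S β β' = S (α * β) (α' * β') := by
  have diagonal_mul : Matrix.diagonal ![1, α', α] * Matrix.diagonal ![1, β', β] =
      Matrix.diagonal ![1, α' * β', α * β] := by
    rw [Matrix.diagonal_mul_diagonal]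
    simp [Fin.forall_fin_succ]
  calc S α α' * S β β'
      = W * Matrix.diagonal ![1, α', α] * (W⁻¹ * W) * Matrix.diagonal ![1, β', β] * W⁻¹ := by
        simp only [S, Matrix.mul_assoc]
    _ = W * (Matrix.diagonal ![1, α', α] * Matrix.diagonal ![1, β', β]) * W⁻¹ := by
        rw [Matrix.nonsing_inv_mul W isUnit_det_W, Matrix.mul_one, Matrix.mul_assoc W]
    _ = S (α * β) (α' * β') := by rw [diagonal_mul, S]

theorem J_eq_S : J = S (ω ^ 2) ω := by
  rw [S, ← J_mul_W, Matrix.mul_nonsing_inv_cancel_right _ _ isUnit_det_W]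

theorem median_mul_J (η η' : ℂ) (w x y z : ZMod 3) (hyz : y ≠ z) :
    M η η' w x y z * J = M η η' (w + 1) (x + 1) y z := by
  have η_shift : (η * ωz (-x) - ωz (-w)) * ω ^ 2 = η * ωz (-(x + 1)) - ωz (-(w + 1)) := by
    rw [neg_add, neg_add, ωz_add, ωz_add, ωz_neg_one]
    ring
  have η'_shift : (η' * ωz x - ωz w) * ω = η' * ωz (x + 1) - ωz (w + 1) := by
    rw [ωz_add, ωz_add, ωz_one]
    ring
  rw [M, M, J_eq_S, S_mul_S, div_mul_eq_mul_div, div_mul_eq_mul_div, η_shift, η'_shift]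
end

section
/- For every s ∈ ℂ, Hajja's s-median operator satisfies M^{00/12}[sω + (1−s)ω², sω² + (1−s)ω] = S[s+ω, s+ω²] = J² + s·((2/3)I − (1/3)J − (1/3)J²). -/
theorem one_add_ω_add_ω_sq : 1 + ω + ω ^ 2 = 0 := by
  simpa [Finset.sum_range_succ] using isPrimitiveRoot_ω.geom_sum_eq_zero (by norm_num)

theorem J_sq_mul_W : J ^ 2 * W = W * Matrix.diagonal ![1, ω ^ 2, ω] := by
  have sq_eigenvalues : (fun i => (![1, ω, ω ^ 2] : Fin 3 → ℂ) i * ![1, ω, ω ^ 2] i) =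
      ![1, ω ^ 2, ω] := by
    ext i
    fin_cases i
    · exact one_mul 1
    · exact (sq ω).symm
    · change ω ^ 2 * ω ^ 2 = ω
      linear_combination ω * ω_pow_three
  calc J ^ 2 * W = J * (J * W) := by rw [sq, Matrix.mul_assoc]
    _ = W * (Matrix.diagonal ![1, ω, ω ^ 2] * Matrix.diagonal ![1, ω, ω ^ 2]) := by
      rw [J_mul_W, ← Matrix.mul_assoc, J_mul_W, Matrix.mul_assoc]
    _ = W * Matrix.diagonal ![1, ω ^ 2, ω] := by
      rw [Matrix.diagonal_mul_diagonal, sq_eigenvalues]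

theorem S_eq_of_mul_W_eq {η η' : ℂ} {A : Matrix (Fin 3) (Fin 3) ℂ}
    (h : A * W = W * Matrix.diagonal ![1, η', η]) : S η η' = A := by
  rw [S, ← h, Matrix.mul_nonsing_inv_cancel_right _ _ isUnit_det_W]

theorem circulant_mul_W (a b c : ℂ) :
    (a • (1 : Matrix (Fin 3) (Fin 3) ℂ) + b • J + c • J ^ 2) * W =
      W * Matrix.diagonal ![a + b + c, a + b * ω + c * ω ^ 2, a + b * ω ^ 2 + c * ω] := by
  have diagonal_eq :
      Matrix.diagonal ![a + b + c, a + b * ω + c * ω ^ 2, a + b * ω ^ 2 + c * ω] =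
        a • (1 : Matrix (Fin 3) (Fin 3) ℂ) + b • Matrix.diagonal ![1, ω, ω ^ 2] +
          c • Matrix.diagonal ![1, ω ^ 2, ω] := by
    ext i j
    fin_cases i <;> fin_cases j <;> simp
  simp only [diagonal_eq, Matrix.add_mul, Matrix.mul_add, Matrix.smul_mul, Matrix.mul_smul,
    Matrix.one_mul, Matrix.mul_one, J_mul_W, J_sq_mul_W]

theorem S_eq_circulant (η η' : ℂ) :
    S η η' = ((1 + η' + η) / 3) • (1 : Matrix (Fin 3) (Fin 3) ℂ) +
      ((1 + ω ^ 2 * η' + ω * η) / 3) • J + ((1 + ω * η' + ω ^ 2 * η) / 3) • J ^ 2 := by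
  have h := one_add_ω_add_ω_sq
  have h3 := ω_pow_three
  have eigenvalue_one : (1 + η' + η) / 3 + (1 + ω ^ 2 * η' + ω * η) / 3 +
      (1 + ω * η' + ω ^ 2 * η) / 3 = 1 := by
    linear_combination (η' + η) / 3 * h
  have eigenvalue_ω : (1 + η' + η) / 3 + (1 + ω ^ 2 * η' + ω * η) / 3 * ω +
      (1 + ω * η' + ω ^ 2 * η) / 3 * ω ^ 2 = η' := by
    linear_combination (1 + η) / 3 * h + (2 * η' + η * ω) / 3 * h3
  have eigenvalue_ω_sq : (1 + η' + η) / 3 + (1 + ω ^ 2 * η' + ω * η) / 3 * ω ^ 2 +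
      (1 + ω * η' + ω ^ 2 * η) / 3 * ω = η := by
    linear_combination (1 + η') / 3 * h + (2 * η + η' * ω) / 3 * h3
  apply S_eq_of_mul_W_eq
  rw [circulant_mul_W, eigenvalue_one, eigenvalue_ω, eigenvalue_ω_sq]

theorem M_eq_S_of_mul_ωz_eq {η η' ζ ζ' : ℂ} {w x y z : ZMod 3} (hyz : y ≠ z)
    (hη : η * ωz (-x) = ωz (-w) + ζ * (ωz (-z) - ωz (-y)))
    (hη' : η' * ωz x = ωz w + ζ' * (ωz z - ωz y)) :
    M η η' w x y z = S ζ ζ' := by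
  have hneg : ωz (-z) - ωz (-y) ≠ 0 :=
    sub_ne_zero.mpr (ωz_injective.ne (neg_injective.ne hyz.symm))
  have hpos : ωz z - ωz y ≠ 0 := sub_ne_zero.mpr (ωz_injective.ne hyz.symm)
  rw [M, hη, hη', add_sub_cancel_left, add_sub_cancel_left, mul_div_cancel_right₀ _ hneg,
    mul_div_cancel_right₀ _ hpos]

theorem hajja_median_formula (s : ℂ) :
    M (s * ω + (1 - s) * ω ^ 2) (s * ω ^ 2 + (1 - s) * ω) 0 0 1 2 = S (s + ω) (s + ω ^ 2) ∧
    S (s + ω) (s + ω ^ 2) =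
      J ^ 2 + s • ((2/3 : ℂ) • (1 : Matrix (Fin 3) (Fin 3) ℂ) - (1/3 : ℂ) • J - (1/3 : ℂ) • J ^ 2) := by
  have h := one_add_ω_add_ω_sq
  have h3 := ω_pow_three
  constructor
  · apply M_eq_S_of_mul_ωz_eq (by decide)
    · change (s * ω + (1 - s) * ω ^ 2) * ω ^ 0 = ω ^ 0 + (s + ω) * (ω ^ 1 - ω ^ 2)
      linear_combination h3
    · change (s * ω ^ 2 + (1 - s) * ω) * ω ^ 0 = ω ^ 0 + (s + ω ^ 2) * (ω ^ 2 - ω ^ 1)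
      linear_combination (1 - ω) * h3
  · have coeff_one : (1 + (s + ω ^ 2) + (s + ω)) / 3 = 2 / 3 * s := by
      linear_combination h / 3
    have coeff_J : (1 + ω ^ 2 * (s + ω ^ 2) + ω * (s + ω)) / 3 = -(1 / 3) * s := by
      linear_combination (1 + s) / 3 * h + ω / 3 * h3
    have coeff_J_sq : (1 + ω * (s + ω ^ 2) + ω ^ 2 * (s + ω)) / 3 = 1 - 1 / 3 * s := by
      linear_combination s / 3 * h + 2 / 3 * h3
    rw [S_eq_circulant, coeff_one, coeff_J, coeff_J_sq]
    module
end

section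
/- For every s ∈ ℂ, Hajja's operator H_s := S[s+ω, s+ω²] and the binary Ceva operators satisfy H_s · H_s = S[−1,−1] · C_{1−s} · C_s. -/
/-- binary Ceva operator `C_s` -/
noncomputable def C (s : ℂ) : Matrix (Fin 3) (Fin 3) ℂ :=
  W * !![1,0,0; 0,0,s+ω; 0,s+ω^2,0] * W⁻¹

/-- Hajja's operator `H_s` -/
noncomputable def H (s : ℂ) : Matrix (Fin 3) (Fin 3) ℂ := S (s+ω) (s+ω^2)

/-!
Conjugation by `W` is multiplicative, so the identity can be read off on the inner matrices. The
product of two matrices that swap the last two coordinates up to scalars is diagonal, hence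
`C (1 - s) * C s` is, like `H s * H s`, of the form `S η η'`. As `1 + ω + ω² = 0`, the factors
`1 - s + ω²` and `1 - s + ω` equal `-(s + ω)` and `-(s + ω²)`, so the two products differ exactly
by the signs that `S (-1) (-1)` carries.
-/

theorem det_vandermonde_pow_ne_zero_of_isPrimitiveRoot {R : Type*} [CommRing R] [IsDomain R]
    {n : ℕ} {ζ : R} (hζ : IsPrimitiveRoot ζ n) :
    (Matrix.vandermonde fun i : Fin n => ζ ^ (i : ℕ)).det ≠ 0 :=
  Matrix.det_vandermonde_ne_zero_iff.mpr fun i j hij =>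
    Fin.ext (hζ.pow_inj i.isLt j.isLt hij)

theorem conj_mul_conj_of_isUnit_det {n R : Type*} [Fintype n] [DecidableEq n] [CommRing R]
    {P : Matrix n n R} (hP : IsUnit P.det) (A B : Matrix n n R) :
    P * A * P⁻¹ * (P * B * P⁻¹) = P * (A * B) * P⁻¹ := by
  simp only [Matrix.mul_assoc, Matrix.nonsing_inv_mul_cancel_left _ _ hP]

theorem diagonal_fin_three_mul_diagonal {R : Type*} [NonUnitalNonAssocSemiring R]
    (a b c a' b' c' : R) :
    Matrix.diagonal ![a, b, c] * Matrix.diagonal ![a', b', c'] =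
      Matrix.diagonal ![a * a', b * b', c * c'] := by
  rw [Matrix.diagonal_mul_diagonal, Matrix.diagonal_eq_diagonal_iff]
  simp [Fin.forall_fin_succ]

theorem blockAntidiagonal_mul_blockAntidiagonal {R : Type*} [NonUnitalNonAssocSemiring R]
    (a b c a' b' c' : R) :
    !![a, 0, 0; 0, 0, b; 0, c, 0] * !![a', 0, 0; 0, 0, b'; 0, c', 0] =
      Matrix.diagonal ![a * a', b * c', c * b'] := by
  ext i j
  fin_cases i <;> fin_cases j <;> simp

theorem one_sub_add_ω (s : ℂ) : 1 - s + ω = -(s + ω ^ 2) := by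
  linear_combination one_add_ω_add_ω_sq

theorem one_sub_add_ω_sq (s : ℂ) : 1 - s + ω ^ 2 = -(s + ω) := by
  linear_combination one_add_ω_add_ω_sq

theorem S_mul_S_s13 (η₁ η₁' η₂ η₂' : ℂ) : S η₁ η₁' * S η₂ η₂' = S (η₁ * η₂) (η₁' * η₂') := by
  simp only [S, conj_mul_conj_of_isUnit_det isUnit_det_W, diagonal_fin_three_mul_diagonal,
    mul_one]

theorem C_mul_C (s t : ℂ) : C s * C t = S ((s + ω ^ 2) * (t + ω)) ((s + ω) * (t + ω ^ 2)) := by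
  simp only [C, S, conj_mul_conj_of_isUnit_det isUnit_det_W,
    blockAntidiagonal_mul_blockAntidiagonal, mul_one]

theorem H_mul_self (s : ℂ) : H s * H s = S ((s + ω) ^ 2) ((s + ω ^ 2) ^ 2) := by
  simp only [H, S_mul_S_s13, sq]

theorem C_one_sub_mul_C (s : ℂ) :
    C (1 - s) * C s = S (-(s + ω) ^ 2) (-(s + ω ^ 2) ^ 2) := by
  rw [C_mul_C, one_sub_add_ω, one_sub_add_ω_sq, neg_mul, neg_mul, ← sq, ← sq]

theorem hajja_squared_eq_ceva (s : ℂ) :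
    H s * H s = S (-1) (-1) * C (1 - s) * C s := by
  calc
    H s * H s = S ((s + ω) ^ 2) ((s + ω ^ 2) ^ 2) := H_mul_self s
    _ = S (-1) (-1) * S (-(s + ω) ^ 2) (-(s + ω ^ 2) ^ 2) := by
      rw [S_mul_S_s13, neg_one_mul, neg_one_mul, neg_neg, neg_neg]
    _ = S (-1) (-1) * C (1 - s) * C s := by rw [mul_assoc, C_one_sub_mul_C]
end
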